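/- arXiv:2312.13023 — 3 statements merged into one kernel-verified Lean document; each statement's English description precedes it below -/
import Mathlib

section
/- Let Z and X be nonempty finite types and let p : Z × X → ℝ be a joint probability mass function with p(z,x) > 0 for all z, x. With p_Z, p_X the marginals, p(x|z) = p(z,x)/p_Z(z) the conditional, MI(Z,X) = Σ_{z,x} p(z,x) · log( p(z,x) / (p_Z(z) · p_X(x)) ), and L_UB = Σ_{z,x} p(z,x) · log p(x|z) − Σ_{z,x} p_Z(z) · p_X(x) · log p(x|z), equality MI(Z,X) = L_UB holds if and only if Z and X are independent, i.e. p(z,x) = p_Z(z) · p_X(x) for all z, x. -/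
open Real Finset

/-!
Write `q = p_Z ⊗ p_X` for the product of the marginals and `D` for relative entropy. Then
`MI = D(p ‖ q)`, while `L_UB = D(p ‖ q) + D(q ‖ p)`: the two sides differ only by a term in
`log p_X`, which has the same mean under `p` and `q` because both have `X`-marginal `p_X`. So
equality means `D(q ‖ p) = 0`, which is the equality case of Gibbs' inequality.
-/

open InformationTheory (klFun klFun_nonneg klFun_eq_zero_iff)

section RelEntropy

variable {ι : Type*} [Fintype ι] {q p : ι → ℝ}

/-- The relative entropy (Kullback–Leibler divergence) `D(q ‖ p)` of two finite families of weights.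
It is real-valued: an index with `p i = 0` contributes `0`, even when `q i ≠ 0` and the usual
convention would give `+∞`. -/
noncomputable def relEntropy (q p : ι → ℝ) : ℝ :=
  ∑ i, q i * log (q i / p i)

theorem relEntropy_eq_sum_mul_klFun (hac : ∀ i, p i = 0 → q i = 0) (hmass : ∑ i, q i = ∑ i, p i) :
    relEntropy q p = ∑ i, p i * klFun (q i / p i) := by
  have hterm (i : ι) : p i * klFun (q i / p i) = q i * log (q i / p i) + (p i - q i) := by
    have hcancel : p i * (q i / p i) = q i := mul_div_cancel_of_imp' (hac i)
    rw [klFun]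
    linear_combination (log (q i / p i) - 1) * hcancel
  simp only [relEntropy, hterm, sum_add_distrib, sum_sub_distrib, hmass, sub_self, add_zero]

theorem relEntropy_eq_zero_iff (hq : ∀ i, 0 ≤ q i) (hp : ∀ i, 0 ≤ p i)
    (hac : ∀ i, p i = 0 → q i = 0) (hmass : ∑ i, q i = ∑ i, p i) :
    relEntropy q p = 0 ↔ q = p := by
  have hratio (i : ι) : 0 ≤ q i / p i := div_nonneg (hq i) (hp i)
  have hterm (i : ι) : p i * klFun (q i / p i) = 0 ↔ q i = p i := by
    rcases eq_or_ne (p i) 0 with hi | hi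
    · simp [hi, hac i hi]
    · rw [mul_eq_zero_iff_left hi, klFun_eq_zero_iff (hratio i), div_eq_one_iff_eq hi]
  rw [relEntropy_eq_sum_mul_klFun hac hmass,
    Fintype.sum_eq_zero_iff_of_nonneg fun i ↦ mul_nonneg (hp i) (klFun_nonneg (hratio i))]
  simp only [funext_iff, Pi.zero_apply, hterm]

end RelEntropy

section ContrastiveBound

variable {Z X : Type*} [Fintype Z] [Fintype X]

/-- The product `a ⊗ b` of two families of weights, which for the marginals of a joint mass function
is the law of an independent pair. -/
def prodWeight (a : Z → ℝ) (b : X → ℝ) (zx : Z × X) : ℝ :=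
  a zx.1 * b zx.2

/-- The contrastive log-ratio bound `L_UB`, where `a` plays the role of the `Z`-marginal, so that
`p (z, x) / a z` is the conditional probability of `x` given `z`, and `b` that of the
`X`-marginal. -/
noncomputable def contrastiveBound (p : Z × X → ℝ) (a : Z → ℝ) (b : X → ℝ) : ℝ :=
  ∑ z, ∑ x, p (z, x) * log (p (z, x) / a z) - ∑ z, ∑ x, a z * b x * log (p (z, x) / a z)

theorem contrastiveBound_eq_relEntropy_add_relEntropy {p : Z × X → ℝ} {a : Z → ℝ} {b : X → ℝ}
    (hp : ∀ z x, p (z, x) ≠ 0) (ha : ∀ z, a z ≠ 0) (hb : ∀ x, b x ≠ 0)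
    (hmarginal : ∀ x, ∑ z, p (z, x) = ∑ z, a z * b x) :
    contrastiveBound p a b =
      relEntropy p (prodWeight a b) + relEntropy (prodWeight a b) p := by
  have hlog_b : ∑ z, ∑ x, (p (z, x) - a z * b x) * log (b x) = 0 := by
    rw [sum_comm]
    simp only [← sum_mul, sum_sub_distrib, hmarginal, sub_self, zero_mul, sum_const_zero]
  have hterm (z : Z) (x : X) :
      p (z, x) * log (p (z, x) / a z) - a z * b x * log (p (z, x) / a z) =
        p (z, x) * log (p (z, x) / (a z * b x)) + a z * b x * log (a z * b x / p (z, x)) +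
          (p (z, x) - a z * b x) * log (b x) := by
    have hab : a z * b x ≠ 0 := mul_ne_zero (ha z) (hb x)
    rw [log_div (hp z x) (ha z), log_div (hp z x) hab, log_div hab (hp z x),
      log_mul (ha z) (hb x)]
    ring
  simp only [contrastiveBound, relEntropy, prodWeight, Fintype.sum_prod_type,
    ← sum_sub_distrib, hterm, sum_add_distrib, hlog_b, add_zero]

end ContrastiveBound

/-- For a strictly positive joint pmf `p` on `Z × X`, equality `MI(Z,X) = L_UB`
holds if and only if `Z` and `X` are independent, i.e. `p (z,x) = pZ z * pX x` for all `z, x`. -/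
theorem mi_eq_LUB_iff_indep {Z X : Type*} [Fintype Z] [Fintype X] [Nonempty Z] [Nonempty X]
    (p : Z × X → ℝ) (pZ : Z → ℝ) (pX : X → ℝ) (pc : Z → X → ℝ)
    (hpos : ∀ z x, 0 < p (z, x))
    (hsum : ∑ zx : Z × X, p zx = 1)
    (hpZ : ∀ z, pZ z = ∑ x : X, p (z, x))
    (hpX : ∀ x, pX x = ∑ z : Z, p (z, x))
    (hpc : ∀ z x, pc z x = p (z, x) / pZ z) :
    ((∑ z : Z, ∑ x : X, p (z, x) * Real.log (p (z, x) / (pZ z * pX x))) =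
        (∑ z : Z, ∑ x : X, p (z, x) * Real.log (pc z x)) -
          (∑ z : Z, ∑ x : X, pZ z * pX x * Real.log (pc z x)))
      ↔ (∀ z x, p (z, x) = pZ z * pX x) := by
  have hZ (z : Z) : 0 < pZ z := hpZ z ▸ sum_pos (fun x _ ↦ hpos z x) univ_nonempty
  have hX (x : X) : 0 < pX x := hpX x ▸ sum_pos (fun z _ ↦ hpos z x) univ_nonempty
  have hmarginal (x : X) : ∑ z, p (z, x) = ∑ z, pZ z * pX x := by
    have hZ_sum : ∑ z, pZ z = 1 := by simp only [hpZ, ← hsum, Fintype.sum_prod_type]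
    rw [← sum_mul, hZ_sum, one_mul, hpX]
  have hmass : ∑ zx, prodWeight pZ pX zx = ∑ zx, p zx := by
    simp only [Fintype.sum_prod_type_right, prodWeight, hmarginal]
  have hMI : ∑ z, ∑ x, p (z, x) * log (p (z, x) / (pZ z * pX x)) =
      relEntropy p (prodWeight pZ pX) := by
    simp only [relEntropy, prodWeight, Fintype.sum_prod_type]
  have hLUB := contrastiveBound_eq_relEntropy_add_relEntropy (fun z x ↦ (hpos z x).ne')
    (fun z ↦ (hZ z).ne') (fun x ↦ (hX x).ne') hmarginal
  have hgibbs : relEntropy (prodWeight pZ pX) p = 0 ↔ prodWeight pZ pX = p :=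
    relEntropy_eq_zero_iff (fun _ ↦ (mul_pos (hZ _) (hX _)).le) (fun _ ↦ (hpos _ _).le)
      (fun _ h ↦ absurd h (hpos _ _).ne') hmass
  simp only [hpc]
  rw [← contrastiveBound, hMI, hLUB, left_eq_add, hgibbs, eq_comm, funext_iff, Prod.forall]
  simp only [prodWeight]
end

section
/- Let Ω be a nonempty finite type and let P, Q : Ω → ℝ be probability mass functions with P(ω) > 0 and Q(ω) > 0 for all ω. Then for every function F : Ω → ℝ, KL(P‖Q) = Σ_ω P(ω) · log( P(ω) / Q(ω) ) ≥ Σ_ω P(ω) · F(ω) − log( Σ_ω Q(ω) · exp(F(ω)) ) (the Donsker–Varadhan inequality for Kullback–Leibler divergence on a finite space). -/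
open Real Finset

/-!
The log-sum inequality `∑ aᵢ log (aᵢ / bᵢ) ≥ (∑ aᵢ) log (∑ aᵢ / ∑ bᵢ)` is Jensen's inequality for
`x ↦ x log x` at the points `aᵢ / bᵢ` with weights `bᵢ`. Taking `a = P` and `b = Q exp F` turns the
right-hand side into `-log (∑ Q exp F)`, while the tilt by `exp F` lowers the left-hand side
`∑ P log (P / Q)` by exactly `∑ P F`.
-/

theorem sum_mul_log_sum_div_sum_le {ι : Type*} {s : Finset ι} {a b : ι → ℝ}
    (ha : ∀ i ∈ s, 0 ≤ a i) (hb : ∀ i ∈ s, 0 ≤ b i) (hab : ∀ i ∈ s, b i = 0 → a i = 0) :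
    (∑ i ∈ s, a i) * log ((∑ i ∈ s, a i) / ∑ i ∈ s, b i) ≤ ∑ i ∈ s, a i * log (a i / b i) := by
  have b_mul_ratio : ∀ i ∈ s, b i * (a i / b i) = a i := fun i hi =>
    mul_div_cancel_of_imp' (hab i hi)
  rcases (sum_nonneg hb).eq_or_lt with hB | hB
  · have a_eq_zero : ∀ i ∈ s, a i = 0 := fun i hi =>
      hab i hi ((sum_eq_zero_iff_of_nonneg hb).mp hB.symm i hi)
    rw [sum_eq_zero a_eq_zero, zero_mul,
      sum_eq_zero fun i hi => by rw [a_eq_zero i hi, zero_mul]]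
  · have jensen := convexOn_mul_log.map_centerMass_le (p := fun i => a i / b i) hb hB
      fun i hi => Set.mem_Ici.mpr (div_nonneg (ha i hi) (hb i hi))
    simp only [centerMass, smul_eq_mul, Function.comp_apply, ← mul_assoc] at jensen
    rw [sum_congr rfl b_mul_ratio,
      sum_congr rfl fun i hi => congrArg (· * log (a i / b i)) (b_mul_ratio i hi),
      mul_assoc, inv_mul_eq_div (∑ i ∈ s, b i) (∑ i ∈ s, a i)] at jensen
    exact le_of_mul_le_mul_left jensen (inv_pos.mpr hB)

theorem mul_log_div_mul_exp {p q : ℝ} (hpq : q = 0 → p = 0) (x : ℝ) :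
    p * log (p / (q * exp x)) = p * log (p / q) - p * x := by
  rcases eq_or_ne p 0 with rfl | hp
  · simp
  · have hq : q ≠ 0 := mt hpq hp
    rw [← div_div, log_div (div_ne_zero hp hq) (exp_ne_zero x), log_exp, mul_sub]

theorem kl_ge_donsker_varadhan_general {Ω : Type*} {s : Finset Ω} {P Q : Ω → ℝ}
    (hP : ∀ ω ∈ s, 0 ≤ P ω) (hPsum : ∑ ω ∈ s, P ω = 1) (hQ : ∀ ω ∈ s, 0 ≤ Q ω)
    (hPQ : ∀ ω ∈ s, Q ω = 0 → P ω = 0) (F : Ω → ℝ) :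
    ∑ ω ∈ s, P ω * log (P ω / Q ω) ≥
      ∑ ω ∈ s, P ω * F ω - log (∑ ω ∈ s, Q ω * exp (F ω)) := by
  have log_sum : -log (∑ ω ∈ s, Q ω * exp (F ω)) ≤
      ∑ ω ∈ s, P ω * log (P ω / (Q ω * exp (F ω))) := by
    simpa only [hPsum, one_mul, one_div, log_inv] using
      sum_mul_log_sum_div_sum_le hP (fun ω hω => mul_nonneg (hQ ω hω) (exp_nonneg (F ω)))
        fun ω hω h => hPQ ω hω ((mul_eq_zero_iff_right (exp_ne_zero (F ω))).mp h)
  have tilt : ∑ ω ∈ s, P ω * log (P ω / (Q ω * exp (F ω))) =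
      ∑ ω ∈ s, P ω * log (P ω / Q ω) - ∑ ω ∈ s, P ω * F ω := by
    rw [← sum_sub_distrib]
    exact sum_congr rfl fun ω hω => mul_log_div_mul_exp (hPQ ω hω) (F ω)
  linarith

/-- Donsker–Varadhan inequality for the Kullback–Leibler divergence on a finite
space: for strictly positive pmfs `P`, `Q` on `Ω` and any `F : Ω → ℝ`,
`KL(P‖Q) ≥ Σ_ω P ω * F ω − log (Σ_ω Q ω * exp (F ω))`. -/
theorem kl_ge_donsker_varadhan {Ω : Type*} [Fintype Ω] [Nonempty Ω]
    (P Q : Ω → ℝ)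
    (hPpos : ∀ ω, 0 < P ω) (hPsum : ∑ ω : Ω, P ω = 1)
    (hQpos : ∀ ω, 0 < Q ω) (hQsum : ∑ ω : Ω, Q ω = 1) :
    ∀ F : Ω → ℝ,
      (∑ ω : Ω, P ω * Real.log (P ω / Q ω)) ≥
        (∑ ω : Ω, P ω * F ω) - Real.log (∑ ω : Ω, Q ω * Real.exp (F ω)) :=
  kl_ge_donsker_varadhan_general (fun ω _ => (hPpos ω).le) hPsum (fun ω _ => (hQpos ω).le)
    fun ω _ h => absurd h (hQpos ω).ne'
end

section
/- Let Z and X be nonempty finite types and let p : Z × X → ℝ be a joint probability mass function with p(z,x) > 0 for all z, x, with marginals p_Z, p_X and conditional p(x|z) = p(z,x)/p_Z(z). Then L_UB − MI(Z,X) = Σ_z p_Z(z) · KL( p_X ‖ p(·|z) ), where MI(Z,X) = Σ_{z,x} p(z,x) · log( p(z,x) / (p_Z(z) · p_X(x)) ), L_UB = Σ_{z,x} p(z,x) · log p(x|z) − Σ_{z,x} p_Z(z) · p_X(x) · log p(x|z), and KL( p_X ‖ p(·|z) ) = Σ_x p_X(x) · log( p_X(x) / p(x|z) ). In particular each summand is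 nonnegative, which re-proves that MI(Z,X) ≤ L_UB. -/
open Real Finset

/-!
Write `q = p_Z ⊗ p_X`. Since `p(z,x) / (p_Z(z) p_X(x)) = p(x|z) / p_X(x)`, the summands of
`L_UB`, `MI` and `Σ_z p_Z(z) KL(p_X ‖ p(·|z))` combine pointwise to
`(p - q)(z,x) * log p_X(x)`. This sums to zero because `log p_X` depends on `x` only and `p`, `q`
have the same marginal on `X`. Nonnegativity of the divergences is Gibbs' inequality.
-/

section Gibbs

theorem sub_le_mul_log_div {a b : ℝ} (ha : 0 ≤ a) (hb : 0 < b) : a - b ≤ a * log (a / b) := by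
  have hkl : 0 ≤ b * InformationTheory.klFun (a / b) :=
    mul_nonneg hb.le (InformationTheory.klFun_nonneg (div_nonneg ha hb.le))
  have hexpand : b * InformationTheory.klFun (a / b) = a * log (a / b) + b - a := by
    rw [InformationTheory.klFun_apply]
    field_simp
  linarith

variable {ι : Type*} [Fintype ι]

/-- The Kullback–Leibler divergence `KL(P ‖ Q)` of two mass functions on a finite type, as a real
number. Where `Q i = 0 < P i` the summand is `0` instead of `∞`. -/
noncomputable def discreteKL (P Q : ι → ℝ) : ℝ :=
  ∑ i, P i * log (P i / Q i)

theorem discreteKL_nonneg {P Q : ι → ℝ} (hP : ∀ i, 0 ≤ P i) (hQ : ∀ i, 0 < Q i)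
    (hmass : ∑ i, Q i ≤ ∑ i, P i) : 0 ≤ discreteKL P Q :=
  calc
    0 ≤ ∑ i, P i - ∑ i, Q i := sub_nonneg.mpr hmass
    _ = ∑ i, (P i - Q i) := (sum_sub_distrib P Q).symm
    _ ≤ discreteKL P Q := sum_le_sum fun i _ => sub_le_mul_log_div (hP i) (hQ i)

end Gibbs

section JointMass

variable {Z X : Type*}

/-- The marginal `p_Z` of a mass function on `Z × X`. -/
def fstMarginal [Fintype X] (p : Z × X → ℝ) (z : Z) : ℝ :=
  ∑ x, p (z, x)

/-- The marginal `p_X` of a mass function on `Z × X`. -/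
def sndMarginal [Fintype Z] (p : Z × X → ℝ) (x : X) : ℝ :=
  ∑ z, p (z, x)

/-- The conditional mass `p(x|z)`; it is `0` where `p_Z(z) = 0`. -/
noncomputable def condMass [Fintype X] (p : Z × X → ℝ) (z : Z) (x : X) : ℝ :=
  p (z, x) / fstMarginal p z

theorem fstMarginal_pos [Fintype X] [Nonempty X] {p : Z × X → ℝ} {z : Z}
    (hp : ∀ x, 0 < p (z, x)) : 0 < fstMarginal p z :=
  sum_pos (fun x _ => hp x) univ_nonempty

theorem sndMarginal_pos [Fintype Z] [Nonempty Z] {p : Z × X → ℝ} {x : X}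
    (hp : ∀ z, 0 < p (z, x)) : 0 < sndMarginal p x :=
  sum_pos (fun z _ => hp z) univ_nonempty

theorem condMass_pos [Fintype X] {p : Z × X → ℝ} {z : Z} (hp : ∀ x, 0 < p (z, x)) (x : X) :
    0 < condMass p z x :=
  have : Nonempty X := ⟨x⟩
  div_pos (hp x) (fstMarginal_pos hp)

theorem sum_condMass [Fintype X] {p : Z × X → ℝ} {z : Z} (hz : fstMarginal p z ≠ 0) :
    ∑ x, condMass p z x = 1 :=
  (sum_div univ (fun x => p (z, x)) _).symm.trans (div_self hz)

variable [Fintype Z] [Fintype X]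

theorem sum_fstMarginal (p : Z × X → ℝ) : ∑ z, fstMarginal p z = ∑ zx, p zx :=
  (Fintype.sum_prod_type p).symm

theorem sum_sndMarginal (p : Z × X → ℝ) : ∑ x, sndMarginal p x = ∑ zx, p zx :=
  (Fintype.sum_prod_type_right p).symm

theorem sum_sum_mul_snd (p : Z × X → ℝ) (f : X → ℝ) :
    ∑ z, ∑ x, p (z, x) * f x = ∑ x, sndMarginal p x * f x := by
  rw [sum_comm]
  exact sum_congr rfl fun x _ => (sum_mul univ (fun z => p (z, x)) (f x)).symm

theorem sndMarginal_fstMarginal_mul_sndMarginal {p : Z × X → ℝ} (hsum : ∑ zx, p zx = 1) :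
    sndMarginal (fun zx => fstMarginal p zx.1 * sndMarginal p zx.2) = sndMarginal p := by
  funext x
  calc
    ∑ z, fstMarginal p z * sndMarginal p x = (∑ z, fstMarginal p z) * sndMarginal p x :=
      (sum_mul ..).symm
    _ = sndMarginal p x := by rw [sum_fstMarginal, hsum, one_mul]

theorem sum_sum_sub_marginals_mul_snd {p : Z × X → ℝ} (hsum : ∑ zx, p zx = 1) (f : X → ℝ) :
    ∑ z, ∑ x, (p (z, x) - fstMarginal p z * sndMarginal p x) * f x = 0 := by
  have hprod := sum_sum_mul_snd (fun zx => fstMarginal p zx.1 * sndMarginal p zx.2) f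
  rw [sndMarginal_fstMarginal_mul_sndMarginal hsum] at hprod
  simp only [sub_mul, sum_sub_distrib]
  rw [sum_sum_mul_snd, hprod, sub_self]

end JointMass

section MutualInformation

variable {Z X : Type*} [Fintype Z] [Fintype X]

/-- The mutual information `MI(Z, X)` of a joint mass function, in nats. -/
noncomputable def mutualInfo (p : Z × X → ℝ) : ℝ :=
  ∑ z, ∑ x, p (z, x) * log (p (z, x) / (fstMarginal p z * sndMarginal p x))

/-- The quantity `L_UB`: the mean of `log p(x|z)` under the joint mass function minus its mean
under the product of the marginals. -/
noncomputable def condLogUpperBound (p : Z × X → ℝ) : ℝ :=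
  ∑ z, ∑ x, p (z, x) * log (condMass p z x) -
    ∑ z, ∑ x, fstMarginal p z * sndMarginal p x * log (condMass p z x)

variable {p : Z × X → ℝ}

theorem log_div_fstMarginal_mul_sndMarginal (hpos : ∀ z x, 0 < p (z, x)) (z : Z) (x : X) :
    log (p (z, x) / (fstMarginal p z * sndMarginal p x)) =
      log (condMass p z x) - log (sndMarginal p x) := by
  have : Nonempty Z := ⟨z⟩
  rw [← div_div, ← condMass, log_div (condMass_pos (hpos z) x).ne'
    (sndMarginal_pos fun z => hpos z x).ne']

theorem log_sndMarginal_div_condMass (hpos : ∀ z x, 0 < p (z, x)) (z : Z) (x : X) :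
    log (sndMarginal p x / condMass p z x) =
      log (sndMarginal p x) - log (condMass p z x) :=
  have : Nonempty Z := ⟨z⟩
  log_div (sndMarginal_pos fun z => hpos z x).ne' (condMass_pos (hpos z) x).ne'

theorem condLogUpperBound_sub_mutualInfo (hpos : ∀ z x, 0 < p (z, x))
    (hsum : ∑ zx, p zx = 1) :
    condLogUpperBound p - mutualInfo p =
      ∑ z, fstMarginal p z * discreteKL (sndMarginal p) (condMass p z) := by
  rw [← sub_eq_zero, ← sum_sum_sub_marginals_mul_snd hsum fun x => log (sndMarginal p x)]
  simp only [condLogUpperBound, mutualInfo, discreteKL, mul_sum, ← sum_sub_distrib]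
  refine sum_congr rfl fun z _ => sum_congr rfl fun x _ => ?_
  rw [log_div_fstMarginal_mul_sndMarginal hpos, log_sndMarginal_div_condMass hpos]
  ring

theorem discreteKL_sndMarginal_condMass_nonneg (hpos : ∀ z x, 0 < p (z, x))
    (hsum : ∑ zx, p zx = 1) (z : Z) : 0 ≤ discreteKL (sndMarginal p) (condMass p z) := by
  have : Nonempty Z := ⟨z⟩
  have : Nonempty X := by
    by_contra! hX
    simp at hsum
  refine discreteKL_nonneg (fun x => (sndMarginal_pos fun z => hpos z x).le)
    (condMass_pos (hpos z)) ?_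
  rw [sum_condMass (fstMarginal_pos (hpos z)).ne', sum_sndMarginal, hsum]

end MutualInformation

/-- For a strictly positive joint pmf `p` on `Z × X`,
`L_UB − MI(Z,X) = Σ_z pZ z * KL(pX ‖ pc z)`, where
`KL(pX ‖ pc z) = Σ_x pX x * log (pX x / pc z x)`; in particular each summand is
nonnegative, which re-proves `MI(Z,X) ≤ L_UB`. -/
theorem LUB_sub_mi_eq_kl {Z X : Type*} [Fintype Z] [Fintype X] [Nonempty Z] [Nonempty X]
    (p : Z × X → ℝ) (pZ : Z → ℝ) (pX : X → ℝ) (pc : Z → X → ℝ)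
    (hpos : ∀ z x, 0 < p (z, x))
    (hsum : ∑ zx : Z × X, p zx = 1)
    (hpZ : ∀ z, pZ z = ∑ x : X, p (z, x))
    (hpX : ∀ x, pX x = ∑ z : Z, p (z, x))
    (hpc : ∀ z x, pc z x = p (z, x) / pZ z) :
    (((∑ z : Z, ∑ x : X, p (z, x) * Real.log (pc z x)) -
          (∑ z : Z, ∑ x : X, pZ z * pX x * Real.log (pc z x))) -
        (∑ z : Z, ∑ x : X, p (z, x) * Real.log (p (z, x) / (pZ z * pX x))) =
      ∑ z : Z, pZ z * ∑ x : X, pX x * Real.log (pX x / pc z x)) ∧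
      (∀ z : Z, 0 ≤ pZ z * ∑ x : X, pX x * Real.log (pX x / pc z x)) ∧
      ((∑ z : Z, ∑ x : X, p (z, x) * Real.log (p (z, x) / (pZ z * pX x))) ≤
        (∑ z : Z, ∑ x : X, p (z, x) * Real.log (pc z x)) -
          (∑ z : Z, ∑ x : X, pZ z * pX x * Real.log (pc z x))) := by
  obtain rfl : pZ = fstMarginal p := funext hpZ
  obtain rfl : pX = sndMarginal p := funext hpX
  obtain rfl : pc = condMass p := funext₂ hpc
  have hidentity := condLogUpperBound_sub_mutualInfo hpos hsum
  have hnonneg : ∀ z, 0 ≤ fstMarginal p z * discreteKL (sndMarginal p) (condMass p z) := fun z =>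
    mul_nonneg (fstMarginal_pos (hpos z)).le
      (discreteKL_sndMarginal_condMass_nonneg hpos hsum z)
  have hle : mutualInfo p ≤ condLogUpperBound p :=
    sub_nonneg.mp (hidentity ▸ sum_nonneg fun z _ => hnonneg z)
  exact ⟨hidentity, hnonneg, hle⟩
end
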